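/- arXiv:1802.08252 — 4 statements merged into one kernel-verified Lean document; each statement's English description precedes it below -/
import Mathlib

section
/- (Chen's identity) Let γ:[a,c]→ℝ^d be a piecewise continuously differentiable path and let a < b < c. Then for every word i_1 i_2 … i_m over {1,…,d}, X^γ_{a,c}(i_1 i_2 … i_m) = Σ_{j=0}^{m} X^γ_{a,b}(i_1 … i_j) · X^γ_{b,c}(i_{j+1} … i_m), where the j = 0 and j = m terms involve the empty word, whose signature value is 1. -/
open MeasureTheory intervalIntegral

/-- `sigRev d γ a w b` is the iterated-integral signature coefficient of the path
`γ : ℝ → (Fin d → ℝ)` over `[a, b]` at the *reversed* word `w`, defined by the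
inductive rule `X_{a,b}(w · i) = ∫_a^b X_{a,t}(w) γ_i'(t) dt`, with value `1` on
the empty word. -/
noncomputable def sigRev (d : ℕ) (γ : ℝ → Fin d → ℝ) (a : ℝ) :
    List (Fin d) → ℝ → ℝ
  | [], _ => 1
  | i :: w, b => ∫ t in a..b, sigRev d γ a w t * deriv (fun s => γ s i) t

/-- The iterated-integral signature `X^γ_{a,b}(w)` of the path `γ` at the word `w`. -/
noncomputable def sig (d : ℕ) (γ : ℝ → Fin d → ℝ) (a b : ℝ) (w : List (Fin d)) : ℝ :=
  sigRev d γ a w.reverse b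

/-- `γ` is piecewise continuously differentiable on `[a, b]`: there is a partition
`a = t₀ < t₁ < … < t_n = b` with `γ` continuously differentiable on each piece. -/
def PiecewiseC1On (d : ℕ) (γ : ℝ → Fin d → ℝ) (a b : ℝ) : Prop :=
  ∃ (n : ℕ) (t : Fin (n + 1) → ℝ), StrictMono t ∧ t 0 = a ∧ t (Fin.last n) = b ∧
    ∀ k : Fin n, ContDiffOn ℝ 1 γ (Set.Icc (t k.castSucc) (t k.succ))

/-!
Induction on the word: the last letter of a word is integrated last. Splitting its integral
`∫_a^c` at `b`, the part over `[a, b]` is the term of the sum with empty second factor; in the part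
over `[b, c]` the induction hypothesis expands the integrand, and the factors depending on `[a, b]`
are constants that leave the integral.
-/

theorem sum_range_take_drop_append_singleton {ι M : Type*} [AddCommMonoid M]
    (G : List ι → List ι → M) (w : List ι) (i : ι) :
    ∑ j ∈ Finset.range ((w ++ [i]).length + 1), G ((w ++ [i]).take j) ((w ++ [i]).drop j) =
      ∑ j ∈ Finset.range (w.length + 1), G (w.take j) (w.drop j ++ [i]) + G (w ++ [i]) [] := by
  rw [Finset.sum_range_succ, List.take_length, List.drop_length, List.length_append,
    List.length_singleton]
  congr 1
  refine Finset.sum_congr rfl fun j hj => ?_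
  have hjw : j ≤ w.length := Finset.mem_range_succ_iff.1 hj
  rw [List.take_append_of_le_length hjw, List.drop_append_of_le_length hjw]

section IteratedIntegral

variable {ι A : Type*} [NormedRing A] [NormedAlgebra ℝ A]

/-- The iterated integral of the family `f` of densities with respect to `μ`, along the word `w`
over `a < t₁ < ⋯ < t_m < t`. The first letter is integrated innermost, and the integrand is
multiplied in the order `f i₁ t₁ * ⋯ * f i_m t_m`, which matters if `A` is not commutative. -/
noncomputable def iteratedIntegral (μ : Measure ℝ) (f : ι → ℝ → A) (a : ℝ) (w : List ι) : ℝ → A :=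
  w.foldl (fun F i t => ∫ s in a..t, F s * f i s ∂μ) 1

variable {μ : Measure ℝ} {f : ι → ℝ → A} {a b c : ℝ}

theorem iteratedIntegral_nil (t : ℝ) : iteratedIntegral μ f a [] t = 1 := rfl

theorem iteratedIntegral_append_singleton (w : List ι) (i : ι) (t : ℝ) :
    iteratedIntegral μ f a (w ++ [i]) t = ∫ s in a..t, iteratedIntegral μ f a w s * f i s ∂μ := by
  simp [iteratedIntegral]

variable [NullSingletonClass μ]

theorem continuousOn_iteratedIntegral (hf : ∀ i, IntervalIntegrable (f i) μ a b) (w : List ι) :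
    ContinuousOn (iteratedIntegral μ f a w) (Set.uIcc a b) := by
  induction w using List.reverseRecOn with
  | nil => exact continuousOn_const
  | append_singleton w i ih =>
    refine (continuousOn_primitive_interval' ((hf i).continuousOn_mul ih) Set.left_mem_uIcc).congr
      fun t _ => ?_
    exact iteratedIntegral_append_singleton w i t

theorem intervalIntegrable_iteratedIntegral_mul (hf : ∀ i, IntervalIntegrable (f i) μ a b)
    (w : List ι) (i : ι) :
    IntervalIntegrable (fun s => iteratedIntegral μ f a w s * f i s) μ a b :=
  (hf i).continuousOn_mul (continuousOn_iteratedIntegral hf w)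

variable [CompleteSpace A]

theorem integral_const_mul_iteratedIntegral_mul (hf : ∀ i, IntervalIntegrable (f i) μ a b)
    (r : A) (w : List ι) (i : ι) :
    ∫ s in a..b, r * (iteratedIntegral μ f a w s * f i s) ∂μ =
      r * iteratedIntegral μ f a (w ++ [i]) b := by
  rw [iteratedIntegral_append_singleton]
  exact (ContinuousLinearMap.mul ℝ A r).intervalIntegral_comp_comm
    (intervalIntegrable_iteratedIntegral_mul hf w i)

theorem chen_identity_general (hab : ∀ i, IntervalIntegrable (f i) μ a b)
    (hbc : ∀ i, IntervalIntegrable (f i) μ b c) (w : List ι) :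
    iteratedIntegral μ f a w c = ∑ j ∈ Finset.range (w.length + 1),
      iteratedIntegral μ f a (w.take j) b * iteratedIntegral μ f b (w.drop j) c := by
  induction w using List.reverseRecOn generalizing c with
  | nil => simp [iteratedIntegral_nil]
  | append_singleton w i ih =>
    let F (j : ℕ) (s : ℝ) : A := iteratedIntegral μ f a (w.take j) b *
      (iteratedIntegral μ f b (w.drop j) s * f i s)
    have integrable_F (j : ℕ) : IntervalIntegrable (F j) μ b c :=
      (intervalIntegrable_iteratedIntegral_mul hbc (w.drop j) i).const_mul _
    have integrand_eq : Set.EqOn (fun s => iteratedIntegral μ f a w s * f i s)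
        (fun s => ∑ j ∈ Finset.range (w.length + 1), F j s) (Set.uIcc b c) := by
      intro s hs
      have hbs (i : ι) : IntervalIntegrable (f i) μ b s :=
        (hbc i).mono_set (Set.uIcc_subset_uIcc_left hs)
      simp only [F, ih hbs, Finset.sum_mul, mul_assoc]
    have integrable_bc :
        IntervalIntegrable (fun s => iteratedIntegral μ f a w s * f i s) μ b c := by
      refine IntervalIntegrable.congr (fun s hs => ?_)
        (IntervalIntegrable.sum (Finset.range (w.length + 1)) fun j _ => integrable_F j)
      simpa using (integrand_eq (Set.uIoc_subset_uIcc hs)).symm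
    have integral_bc : ∫ s in b..c, iteratedIntegral μ f a w s * f i s ∂μ =
        ∑ j ∈ Finset.range (w.length + 1),
          iteratedIntegral μ f a (w.take j) b * iteratedIntegral μ f b (w.drop j ++ [i]) c := by
      rw [integral_congr integrand_eq, integral_finsetSum fun j _ => integrable_F j]
      exact Finset.sum_congr rfl fun j _ => integral_const_mul_iteratedIntegral_mul hbc _ _ i
    rw [sum_range_take_drop_append_singleton (fun u v =>
        iteratedIntegral μ f a u b * iteratedIntegral μ f b v c),
      iteratedIntegral_nil, mul_one, ← integral_bc, iteratedIntegral_append_singleton,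
      iteratedIntegral_append_singleton, add_comm, integral_add_adjacent_intervals
        (intervalIntegrable_iteratedIntegral_mul hab w i) integrable_bc]

end IteratedIntegral

theorem sig_eq_iteratedIntegral (d : ℕ) (γ : ℝ → Fin d → ℝ) (a b : ℝ) (w : List (Fin d)) :
    sig d γ a b w = iteratedIntegral volume (fun i => deriv fun s => γ s i) a w b := by
  induction w using List.reverseRecOn generalizing b with
  | nil => rfl
  | append_singleton w i ih =>
    simp only [iteratedIntegral_append_singleton, ← ih, sig, List.reverse_append,
      List.reverse_singleton, List.singleton_append, sigRev]

section PiecewiseC1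

variable {E : Type*} [NormedAddCommGroup E]

theorem intervalIntegrable_of_forall_fin {f : ℝ → E} {μ : Measure ℝ} {n : ℕ}
    {t : Fin (n + 1) → ℝ} (h : ∀ k : Fin n, IntervalIntegrable f μ (t k.castSucc) (t k.succ)) :
    IntervalIntegrable f μ (t 0) (t (Fin.last n)) := by
  have from_zero (k : Fin (n + 1)) : IntervalIntegrable f μ (t 0) (t k) := by
    induction k using Fin.induction with
    | zero => exact IntervalIntegrable.refl
    | succ k ih => exact ih.trans (h k)
  exact from_zero (Fin.last n)

theorem intervalIntegrable_deriv_of_contDiffOn_uIcc [NormedSpace ℝ E] {f : ℝ → E} {a b : ℝ}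
    (hf : ContDiffOn ℝ 1 f (Set.uIcc a b)) : IntervalIntegrable (deriv f) volume a b := by
  obtain rfl | hab := eq_or_ne a b
  · exact IntervalIntegrable.refl
  have continuousOn_derivWithin : ContinuousOn (derivWithin f (Set.uIcc a b)) (Set.uIcc a b) :=
    hf.continuousOn_derivWithin (uniqueDiffOn_Icc (inf_lt_sup.2 hab)) le_rfl
  exact continuousOn_derivWithin.intervalIntegrable.congr_uIoo fun s hs =>
    derivWithin_of_mem_nhds (Icc_mem_nhds hs.1 hs.2)

theorem PiecewiseC1On.intervalIntegrable_deriv {d : ℕ} {γ : ℝ → Fin d → ℝ} {a b : ℝ}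
    (hγ : PiecewiseC1On d γ a b) (i : Fin d) :
    IntervalIntegrable (deriv fun s => γ s i) volume a b := by
  obtain ⟨n, t, ht, rfl, rfl, hγ⟩ := hγ
  refine intervalIntegrable_of_forall_fin fun k => intervalIntegrable_deriv_of_contDiffOn_uIcc ?_
  rw [Set.uIcc_of_le (ht k.castSucc_lt_succ).le]
  exact contDiffOn_pi.1 (hγ k) i

end PiecewiseC1

/-- Chen's identity: for a piecewise continuously differentiable path
`γ` and `a < b < c`, `X^γ_{a,c}(w) = ∑_{j=0}^m X^γ_{a,b}(w₁…w_j) · X^γ_{b,c}(w_{j+1}…w_m)`. -/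
theorem chen_identity (d : ℕ) (a b c : ℝ) (hab : a < b) (hbc : b < c)
    (γ : ℝ → Fin d → ℝ) (hγ : PiecewiseC1On d γ a c) (w : List (Fin d)) :
    sig d γ a c w =
      ∑ j ∈ Finset.range (w.length + 1),
        sig d γ a b (w.take j) * sig d γ b c (w.drop j) := by
  have hb : b ∈ Set.uIcc a c := Set.mem_uIcc_of_le hab.le hbc.le
  have hγab (i : Fin d) := (hγ.intervalIntegrable_deriv i).mono_set (Set.uIcc_subset_uIcc_left hb)
  have hγbc (i : Fin d) := (hγ.intervalIntegrable_deriv i).mono_set (Set.uIcc_subset_uIcc_right hb)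
  simpa only [sig_eq_iteratedIntegral] using chen_identity_general hγab hγbc w
end

section
/- (Reparametrization invariance of the signature) Let γ:[a,b]→ℝ^d be a piecewise continuously differentiable path and let φ:[a',b']→[a,b] be a continuously differentiable, strictly increasing surjection. Then the reparametrized path γ∘φ has the same signature as γ: for every word w over {1,…,d}, X^{γ∘φ}_{a',b'}(w) = X^γ_{a,b}(w). -/
open MeasureTheory intervalIntegral

/-!
By induction on the word, the coefficient of `γ ∘ φ` up to time `t` equals that of `γ` up to time
`φ t`; each letter is one change of variables `u = φ t`. The chain rule it needs may fail at `t`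
only where `γ` is not differentiable at `φ t`. There, either `t` is an isolated point of its level
set of `φ`, which happens for only countably many `t`, or `φ` and `γ ∘ φ` return to their values at
`t` arbitrarily close to `t`, so that both derivatives vanish.
-/

open Filter Set Topology

theorem countable_sdiff_derivedSet {X : Type*} [TopologicalSpace X] [HereditarilyLindelofSpace X]
    (A : Set X) : (A \ derivedSet A).Countable := by
  refine (HereditarilyLindelofSpace.isLindelof _).countable_of_isDiscrete
    (isDiscrete_iff_nhdsNE.mpr fun x hx => ?_)
  have hA : 𝓝[≠] x ⊓ 𝓟 A = ⊥ := not_neBot.mp hx.2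
  exact eq_bot_mono (inf_le_inf_left _ (principal_mono.mpr sdiff_subset)) hA

theorem countable_setOf_deriv_comp_ne {E : Type*} [NormedAddCommGroup E] [NormedSpace ℝ E]
    {f : ℝ → E} {φ : ℝ → ℝ} {s : Set ℝ} (hφ : ∀ t ∈ s, DifferentiableAt ℝ φ t)
    (hf : {u ∈ φ '' s | ¬DifferentiableAt ℝ f u}.Countable) :
    {t ∈ s | deriv (fun r => f (φ r)) t ≠ deriv φ t • deriv f (φ t)}.Countable := by
  refine (hf.biUnion fun u _ => countable_sdiff_derivedSet (φ ⁻¹' {u})).mono ?_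
  rintro t ⟨hts, hne⟩
  have hfφ : ¬DifferentiableAt ℝ f (φ t) := fun h => hne (deriv.scomp t h (hφ t hts))
  refine mem_biUnion ⟨mem_image_of_mem φ hts, hfφ⟩ ⟨rfl, fun hacc => hne ?_⟩
  have hfreq : ∃ᶠ r in 𝓝[≠] t, φ r = φ t := accPt_iff_frequently_nhdsNE.mp hacc
  -- If `f ∘ φ` is not differentiable at `t`, its `deriv` is `0` by convention.
  rw [deriv_zero_of_frequently_const hfreq, zero_smul,
    deriv_zero_of_frequently_const (hfreq.mono fun _ h => congrArg f h)]

theorem exists_mem_Ioo_castSucc_succ {α : Type*} [LinearOrder α] {n : ℕ} {t : Fin (n + 1) → α}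
    {y : α} (hy : y ∉ range t) (h₀ : t 0 ≤ y) (hlast : y ≤ t (Fin.last n)) :
    ∃ k : Fin n, y ∈ Ioo (t k.castSucc) (t k.succ) := by
  by_contra! hgap
  have hlt : ∀ j, t j < y := by
    intro j
    induction j using Fin.induction with
    | zero => exact h₀.lt_of_ne fun h => hy ⟨_, h⟩
    | succ k ih =>
      exact (not_lt.mp fun h => hgap k ⟨ih, h⟩).lt_of_ne fun h => hy ⟨_, h⟩
  exact (hlt _).not_ge hlast

namespace PiecewiseC1On

variable {d : ℕ} {γ : ℝ → Fin d → ℝ} {a b : ℝ}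

theorem le (hγ : PiecewiseC1On d γ a b) : a ≤ b := by
  obtain ⟨n, t, ht, rfl, rfl, -⟩ := hγ
  exact ht.monotone (Fin.zero_le _)

theorem finite_setOf_not_differentiableAt (hγ : PiecewiseC1On d γ a b) :
    {u ∈ Icc a b | ¬DifferentiableAt ℝ γ u}.Finite := by
  obtain ⟨n, t, -, rfl, rfl, hC⟩ := hγ
  refine (finite_range t).subset fun u ⟨hu, hdiff⟩ => ?_
  by_contra hut
  obtain ⟨k, hk⟩ := exists_mem_Ioo_castSucc_succ hut hu.1 hu.2
  exact hdiff (((hC k).differentiableOn one_ne_zero).differentiableAt (Icc_mem_nhds hk.1 hk.2))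

end PiecewiseC1On

theorem le_and_map_endpoints_eq_of_image_Icc {α β : Type*} [Preorder α] [PartialOrder β] {φ : α → β}
    {a b : β} {a' b' : α} (hmono : MonotoneOn φ (Icc a' b')) (hab : a ≤ b)
    (hsurj : φ '' Icc a' b' = Icc a b) : a' ≤ b' ∧ φ a' = a ∧ φ b' = b := by
  have hab' : a' ≤ b' := nonempty_Icc.mp (image_nonempty.mp (hsurj ▸ nonempty_Icc.mpr hab))
  have hleast : IsLeast (Icc a b) (φ a') := hsurj ▸ hmono.map_isLeast (isLeast_Icc hab')
  have hgreatest : IsGreatest (Icc a b) (φ b') :=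
    hsurj ▸ hmono.map_isGreatest (isGreatest_Icc hab')
  exact ⟨hab', hleast.unique (isLeast_Icc hab), hgreatest.unique (isGreatest_Icc hab)⟩

theorem integral_deriv_smul_comp_of_monotoneOn {E : Type*} [NormedAddCommGroup E]
    [NormedSpace ℝ E] {φ : ℝ → ℝ} {a b : ℝ} (hab : a ≤ b) (hφ : ContinuousOn φ (Icc a b))
    (hφ' : DifferentiableOn ℝ φ (Ioo a b)) (hmono : MonotoneOn φ (Icc a b)) (g : ℝ → E) :
    ∫ t in a..b, deriv φ t • g (φ t) = ∫ u in φ a..φ b, g u := by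
  have hIoo : Ioo (min a b) (max a b) = Ioo a b := by rw [min_eq_left hab, max_eq_right hab]
  refine integral_deriv_smul_comp_of_deriv_nonneg (g := g) (by rwa [uIcc_of_le hab])
    (fun t ht => ?_) (fun t ht => ?_)
  all_goals have hnhds : Ioo a b ∈ 𝓝 t := isOpen_Ioo.mem_nhds (hIoo ▸ ht)
  · exact (hφ'.differentiableAt hnhds).hasDerivAt
  · rw [← derivWithin_of_mem_nhds hnhds]
    exact (hmono.mono Ioo_subset_Icc_self).derivWithin_nonneg

theorem sigRev_comp {d : ℕ} {γ : ℝ → Fin d → ℝ} {φ : ℝ → ℝ} {a b : ℝ} (hab : a ≤ b)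
    (hφ : ContinuousOn φ (Icc a b)) (hφ' : DifferentiableOn ℝ φ (Ioo a b))
    (hmono : MonotoneOn φ (Icc a b))
    (hγ : {u ∈ Icc (φ a) (φ b) | ¬DifferentiableAt ℝ γ u}.Countable) (w : List (Fin d)) :
    sigRev d (fun t => γ (φ t)) a w b = sigRev d γ (φ a) w (φ b) := by
  induction w generalizing b with
  | nil => rfl
  | cons i w ih =>
    have hcomp : ∀ t ∈ Ioo a b,
        sigRev d (fun r => γ (φ r)) a w t = sigRev d γ (φ a) w (φ t) := by
      intro t ht
      have hsub : Icc a t ⊆ Icc a b := Icc_subset_Icc_right ht.2.le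
      have hφt : φ t ≤ φ b := hmono (Ioo_subset_Icc_self ht) (right_mem_Icc.mpr hab) ht.2.le
      exact ih ht.1.le (hφ.mono hsub) (hφ'.mono (Ioo_subset_Ioo_right ht.2.le)) (hmono.mono hsub)
        (hγ.mono (inter_subset_inter_left _ (Icc_subset_Icc_right hφt)))
    have hγi : {u ∈ φ '' Ioo a b | ¬DifferentiableAt ℝ (fun r => γ r i) u}.Countable := by
      refine hγ.mono ?_
      rintro u ⟨hu, hdiff⟩
      exact ⟨hmono.image_Icc_subset (image_mono Ioo_subset_Icc_self hu),
        fun h => hdiff (differentiableAt_pi.mp h i)⟩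
    have hchain := countable_setOf_deriv_comp_ne
      (fun t ht => hφ'.differentiableAt (Ioo_mem_nhds ht.1 ht.2)) hγi
    calc ∫ t in a..b, sigRev d (fun r => γ (φ r)) a w t * deriv (fun r => γ (φ r) i) t
        = ∫ t in a..b, deriv φ t •
            (sigRev d γ (φ a) w (φ t) * deriv (fun r => γ r i) (φ t)) := by
          simp only [integral_of_le hab, integral_Ioc_eq_integral_Ioo]
          refine setIntegral_congr_ae measurableSet_Ioo ?_
          filter_upwards [hchain.ae_notMem volume] with t hexc ht
          have hderiv : deriv (fun r => γ (φ r) i) t = deriv φ t • deriv (fun r => γ r i) (φ t) :=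
            not_not.mp fun hne => hexc ⟨ht, hne⟩
          rw [hcomp t ht, hderiv, mul_smul_comm]
      _ = ∫ u in φ a..φ b, sigRev d γ (φ a) w u * deriv (fun r => γ r i) u :=
          integral_deriv_smul_comp_of_monotoneOn hab hφ hφ' hmono
            fun u => sigRev d γ (φ a) w u * deriv (fun r => γ r i) u

theorem sig_reparam_invariant_general {d : ℕ} {γ : ℝ → Fin d → ℝ} {φ : ℝ → ℝ} {a b : ℝ}
    (hab : a ≤ b) (hφ : ContinuousOn φ (Icc a b)) (hφ' : DifferentiableOn ℝ φ (Ioo a b))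
    (hmono : MonotoneOn φ (Icc a b))
    (hγ : {u ∈ Icc (φ a) (φ b) | ¬DifferentiableAt ℝ γ u}.Countable) (w : List (Fin d)) :
    sig d (fun t => γ (φ t)) a b w = sig d γ (φ a) (φ b) w :=
  sigRev_comp hab hφ hφ' hmono hγ w.reverse

/-- reparametrization invariance: if `φ : [a',b'] → [a,b]` is a
continuously differentiable, strictly increasing surjection, then `γ ∘ φ` has the
same signature as `γ`. -/
theorem sig_reparam_invariant (d : ℕ) (a b a' b' : ℝ) (γ : ℝ → Fin d → ℝ)
    (hγ : PiecewiseC1On d γ a b) (φ : ℝ → ℝ)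
    (hφ : ContDiffOn ℝ 1 φ (Set.Icc a' b'))
    (hmono : StrictMonoOn φ (Set.Icc a' b'))
    (hsurj : φ '' Set.Icc a' b' = Set.Icc a b)
    (w : List (Fin d)) :
    sig d (fun t => γ (φ t)) a' b' w = sig d γ a b w := by
  obtain ⟨hab', rfl, rfl⟩ := le_and_map_endpoints_eq_of_image_Icc hmono.monotoneOn hγ.le hsurj
  exact sig_reparam_invariant_general hab' hφ.continuousOn
    ((hφ.differentiableOn one_ne_zero).mono Ioo_subset_Icc_self) hmono.monotoneOn
    hγ.finite_setOf_not_differentiableAt.countable w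
end

section
/- (Witt's second formula) Let n_1, …, n_d be nonnegative integers with n_1 + ⋯ + n_d = m ≥ 1. The number of Lyndon words of length m over the alphabet {1,…,d} in which letter i occurs exactly n_i times (equivalently, the number of Hall basis elements of the free Lie algebra with that foliage letter-count) equals (1/m) Σ_{δ} μ(δ) · (m/δ)! / ((n_1/δ)! ⋯ (n_d/δ)!), where the sum ranges over all positive integers δ dividing every n_i and μ is the Möbius function. -/
/-- A Lyndon word: a nonempty word that is strictly smaller (in lexicographic order)
than all of its nontrivial rotations. -/
def IsLyndon {α : Type*} [LinearOrder α] (w : List α) : Prop :=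
  w ≠ [] ∧ ∀ k, 0 < k → k < w.length → w < w.drop k ++ w.take k

/-! Call a nonempty word *primitive* if all its rotations are distinct. The rotations of a primitive
word of length `m` are `m` words, exactly one of which, the least, is Lyndon; and Lyndon words are
primitive. So on any set of words of length `m` stable under rotation, `m` times the number of
Lyndon words is the number of primitive words.

A word of length `m` and rotation period `p` is a `δ`-th power exactly when `δ ∣ m / p`, and it is
primitive exactly when `m / p = 1`. Summing `μ δ` over the `δ` for which the word is a `δ`-th power
thus gives the indicator of primitivity. Finally, the `δ`-th powers with letter counts `n i` are in
bijection with the words with letter counts `n i / δ`, which a multinomial coefficient counts.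
-/

open Finset
open scoped Nat List ArithmeticFunction.Moebius

section Rotation

variable {α : Type*} {w w' : List α}

/-- The rotation period of a word `w`: the least `p > 0` such that rotating `w` by `p` letters
gives back `w`. It is `1` for the empty word. -/
noncomputable def rotationPeriod (w : List α) : ℕ :=
  Function.minimalPeriod (fun v : List α => v.rotate 1) w

lemma iterate_rotate_one (w : List α) (k : ℕ) :
    (fun v : List α => v.rotate 1)^[k] w = w.rotate k := by
  induction k with
  | zero => simp
  | succ k ih => rw [Function.iterate_succ_apply', ih, List.rotate_rotate]

lemma rotate_eq_self_iff_rotationPeriod_dvd {k : ℕ} :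
    w.rotate k = w ↔ rotationPeriod w ∣ k := by
  rw [rotationPeriod, ← Function.isPeriodicPt_iff_minimalPeriod_dvd, Function.IsPeriodicPt,
    Function.IsFixedPt, iterate_rotate_one]

lemma rotationPeriod_dvd_length (w : List α) : rotationPeriod w ∣ w.length :=
  rotate_eq_self_iff_rotationPeriod_dvd.1 w.rotate_length

lemma rotationPeriod_eq_of_isRotated (h : w ~r w') : rotationPeriod w = rotationPeriod w' := by
  obtain ⟨k, rfl⟩ := h
  refine Nat.dvd_right_iff_eq.1 fun q => ?_
  rw [← rotate_eq_self_iff_rotationPeriod_dvd, ← rotate_eq_self_iff_rotationPeriod_dvd,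
    List.rotate_rotate, add_comm, ← List.rotate_rotate, List.rotate_eq_rotate]

/-- A primitive word: a word whose rotations by `0, 1, …, w.length - 1` are pairwise distinct,
encoded as the rotation period being the full length. The empty word is not primitive. -/
def IsPrimitiveWord (w : List α) : Prop :=
  rotationPeriod w = w.length

lemma isPrimitiveWord_congr (h : w ~r w') : IsPrimitiveWord w ↔ IsPrimitiveWord w' := by
  rw [IsPrimitiveWord, IsPrimitiveWord, rotationPeriod_eq_of_isRotated h, h.perm.length_eq]

lemma IsPrimitiveWord.ne_nil (h : IsPrimitiveWord w) : w ≠ [] := by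
  rintro rfl
  have : rotationPeriod ([] : List α) ∣ 1 := rotate_eq_self_iff_rotationPeriod_dvd.1 (by simp)
  rw [h] at this
  simp at this

lemma IsPrimitiveWord.card_toFinset_cyclicPermutations [DecidableEq α]
    (h : IsPrimitiveWord w) : #w.cyclicPermutations.toFinset = w.length := by
  have hlen := List.length_cyclicPermutations_of_ne_nil w h.ne_nil
  rw [List.toFinset_card_of_nodup, hlen]
  refine List.nodup_iff_injective_get.2 fun i j hij => Fin.ext ?_
  rw [List.get_cyclicPermutations, List.get_cyclicPermutations, ← iterate_rotate_one,
    ← iterate_rotate_one] at hij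
  have hperiod : w.cyclicPermutations.length = rotationPeriod w := hlen.trans h.symm
  exact (Function.iterate_eq_iterate_iff_of_lt_minimalPeriod
    (i.2.trans_eq hperiod) (j.2.trans_eq hperiod)).1 hij

end Rotation

section Power

variable {α : Type*} {u v w : List α} {k : ℕ}

/-- The `k`-th power of a word: the concatenation of `k` copies of it. -/
def wordPow (u : List α) (k : ℕ) : List α :=
  (List.replicate k u).flatten

@[simp] lemma wordPow_zero (u : List α) : wordPow u 0 = [] := rfl

lemma wordPow_succ (u : List α) (k : ℕ) : wordPow u (k + 1) = u ++ wordPow u k := rfl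

lemma wordPow_succ' (u : List α) (k : ℕ) : wordPow u (k + 1) = wordPow u k ++ u := by
  simp [wordPow, List.replicate_succ']

@[simp] lemma length_wordPow (u : List α) (k : ℕ) : (wordPow u k).length = k * u.length := by
  simp [wordPow]

lemma coe_wordPow (u : List α) (k : ℕ) : (wordPow u k : Multiset α) = k • (u : Multiset α) := by
  induction k with
  | zero => simp
  | succ k ih => rw [wordPow_succ', ← Multiset.coe_add, ih, succ_nsmul]

lemma wordPow_left_injective (hk : k ≠ 0) : Function.Injective fun u : List α => wordPow u k := by
  intro u v huv
  have hlen : k * u.length = k * v.length := by simpa using congrArg List.length huv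
  obtain ⟨j, rfl⟩ := Nat.exists_eq_succ_of_ne_zero hk
  exact (List.append_inj huv (Nat.eq_of_mul_eq_mul_left hk.bot_lt hlen)).1

lemma rotate_length_wordPow (u : List α) (k : ℕ) :
    (wordPow u k).rotate u.length = wordPow u k := by
  cases k with
  | zero => simp
  | succ k => rw [wordPow_succ, List.rotate_append_length_eq, ← wordPow_succ', wordPow_succ]

lemma eq_wordPow_of_append_comm (hcomm : u ++ v = v ++ u) (hlen : v.length = k * u.length) :
    v = wordPow u k := by
  induction k generalizing v with
  | zero => simpa using hlen
  | succ k ih =>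
    have hprefix : u <+: v :=
      List.prefix_of_prefix_length_le (hcomm ▸ List.prefix_append u v) (List.prefix_append v u)
        (hlen ▸ Nat.le_mul_of_pos_left _ k.succ_pos)
    obtain ⟨v', rfl⟩ := hprefix
    rw [List.append_assoc, List.append_cancel_left_eq] at hcomm
    rw [wordPow_succ, ← ih hcomm (by rw [List.length_append] at hlen; linarith)]

lemma eq_wordPow_take_of_rotate_eq_self {q : ℕ} (hlen : w.length = k * q)
    (hrot : w.rotate q = w) : w = wordPow (w.take q) k := by
  obtain rfl | hk := eq_or_ne k 0
  · simpa using hlen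
  have hq : q ≤ w.length := hlen ▸ Nat.le_mul_of_pos_left q hk.bot_lt
  have htake : (w.take q).length = q := by simpa using hq
  have hcomm : w.take q ++ w.drop q = w.drop q ++ w.take q := by
    rw [List.take_append_drop, ← List.rotate_eq_drop_append_take hq, hrot]
  obtain ⟨j, rfl⟩ := Nat.exists_eq_succ_of_ne_zero hk
  have hdrop : (w.drop q).length = j * (w.take q).length := by
    rw [List.length_drop, htake, hlen, Nat.succ_mul, Nat.add_sub_cancel]
  rw [wordPow_succ, ← eq_wordPow_of_append_comm hcomm hdrop, List.take_append_drop]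

/-- A `k`-th power in the monoid of words. -/
def IsWordPow (k : ℕ) (w : List α) : Prop :=
  ∃ u, wordPow u k = w

lemma isWordPow_iff_mul_rotationPeriod_dvd_length :
    IsWordPow k w ↔ k * rotationPeriod w ∣ w.length := by
  constructor
  · rintro ⟨u, rfl⟩
    rw [length_wordPow]
    exact mul_dvd_mul_left k
      (rotate_eq_self_iff_rotationPeriod_dvd.1 (rotate_length_wordPow u k))
  · rintro ⟨c, hc⟩
    exact ⟨_, (eq_wordPow_take_of_rotate_eq_self (hc.trans (mul_assoc _ _ _))
      (rotate_eq_self_iff_rotationPeriod_dvd.2 (dvd_mul_right _ c))).symm⟩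

lemma IsWordPow.dvd_count [DecidableEq α] (h : IsWordPow k w) (a : α) : k ∣ w.count a := by
  obtain ⟨u, rfl⟩ := h
  rw [← Multiset.coe_count, coe_wordPow, Multiset.count_nsmul]
  exact dvd_mul_right _ _

end Power

section Arrangements

variable {α : Type*} {s : Multiset α}

open scoped Classical in
/-- The words obtained by ordering the letters of the multiset `s` in all possible ways. -/
noncomputable def arrangements (s : Multiset α) : Finset (List α) :=
  s.lists.toFinset

@[simp] lemma mem_arrangements {w : List α} : w ∈ arrangements s ↔ (w : Multiset α) = s := by
  simp [arrangements, eq_comm]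

lemma mem_arrangements_iff_count_eq [DecidableEq α] {T : Finset α} (hT : ∀ a ∈ s, a ∈ T)
    {w : List α} :
    w ∈ arrangements s ↔ w.length = s.card ∧ ∀ a ∈ T, w.count a = s.count a := by
  rw [mem_arrangements]
  refine ⟨by rintro rfl; simp, fun ⟨hlen, hcount⟩ => ?_⟩
  have hle : s ≤ (w : Multiset α) := Multiset.le_iff_count.2 fun a => by
    by_cases ha : a ∈ s
    · rw [Multiset.coe_count, hcount a (hT a ha)]
    · simp [Multiset.count_eq_zero.2 ha]
  exact (Multiset.eq_of_le_of_card_le hle hlen.le).symm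

lemma exists_multiset_count_eq [DecidableEq α] (T : Finset α) (n : α → ℕ) :
    ∃ s : Multiset α, (∀ a ∈ s, a ∈ T) ∧ ∀ a ∈ T, s.count a = n a := by
  refine ⟨∑ a ∈ T, Multiset.replicate (n a) a, fun a ha => ?_, fun a ha => ?_⟩
  · obtain ⟨b, hb, hab⟩ := Multiset.mem_sum.1 ha
    rwa [Multiset.eq_of_mem_replicate hab]
  · simp [Multiset.count_sum', Multiset.count_replicate, ha]

lemma ncard_setOf_ofFn_mem {m : ℕ} {A : Finset (List α)} (hlen : ∀ w ∈ A, w.length = m) :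
    {f : Fin m → α | List.ofFn f ∈ A}.ncard = #A := by
  have himage : List.ofFn '' {f : Fin m → α | List.ofFn f ∈ A} = A := by
    refine Set.image_preimage_eq_of_subset fun w hw => ?_
    obtain rfl := hlen w hw
    exact ⟨w.get, List.ofFn_get w⟩
  rw [← Set.ncard_image_of_injective _ List.ofFn_injective, himage, Set.ncard_coe_finset]

lemma card_arrangements_eq_sum_card_arrangements_erase [DecidableEq α] (hs : s ≠ 0) :
    #(arrangements s) = ∑ a ∈ s.toFinset, #(arrangements (s.erase a)) := by
  have hcons : arrangements s =
      s.toFinset.biUnion fun a => (arrangements (s.erase a)).image (List.cons a) := by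
    ext w
    simp only [mem_arrangements, mem_biUnion, Multiset.mem_toFinset, mem_image]
    constructor
    · rintro rfl
      obtain ⟨a, t, rfl⟩ := List.exists_cons_of_ne_nil (by simpa using hs)
      exact ⟨a, by simp, t, by simp, rfl⟩
    · rintro ⟨a, ha, t, ht, rfl⟩
      rw [← Multiset.cons_coe, ht, Multiset.cons_erase ha]
  rw [hcons, card_biUnion]
  · simp only [card_image_of_injective _ List.cons_injective]
  · intro a _ b _ hab
    simp only [disjoint_left, mem_image]
    rintro _ ⟨t, _, rfl⟩ ⟨t', _, h⟩
    exact hab (List.cons.inj h).1.symm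

lemma prod_factorial_count_eq_count_mul_erase [DecidableEq α] {T : Finset α} {a : α}
    (has : a ∈ s) (haT : a ∈ T) :
    ∏ b ∈ T, (s.count b)! = s.count a * ∏ b ∈ T, ((s.erase a).count b)! := by
  rw [← mul_prod_erase _ _ haT, ← mul_prod_erase T (fun b => ((s.erase a).count b)!) haT,
    Multiset.count_erase_self, ← mul_assoc,
    Nat.mul_factorial_pred (Multiset.count_ne_zero.2 has)]
  congr 1
  exact prod_congr rfl fun b hb => by rw [Multiset.count_erase_of_ne (ne_of_mem_erase hb)]

theorem card_arrangements_mul_prod_factorial_count [DecidableEq α] {T : Finset α}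
    (hT : ∀ a ∈ s, a ∈ T) : #(arrangements s) * ∏ a ∈ T, (s.count a)! = s.card ! := by
  induction hm : s.card generalizing s with
  | zero =>
    obtain rfl := Multiset.card_eq_zero.1 hm
    have hnil : arrangements (0 : Multiset α) = {[]} := by ext; simp
    simp [hnil]
  | succ m ih =>
    have hterm : ∀ a ∈ s.toFinset,
        #(arrangements (s.erase a)) * ∏ b ∈ T, (s.count b)! = s.count a * m ! := by
      intro a ha
      rw [Multiset.mem_toFinset] at ha
      rw [prod_factorial_count_eq_count_mul_erase ha (hT a ha), mul_left_comm,
        ih (fun b hb => hT b (Multiset.mem_of_mem_erase hb))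
          (by rw [Multiset.card_erase_of_mem ha, hm, Nat.pred_succ])]
    have hs : s ≠ 0 := by rintro rfl; simp at hm
    rw [card_arrangements_eq_sum_card_arrangements_erase hs, sum_mul, sum_congr rfl hterm,
      ← sum_mul, Multiset.toFinset_sum_count_eq, hm, Nat.factorial_succ]

open scoped Classical in
lemma card_isWordPow_arrangements_nsmul {k : ℕ} (hk : k ≠ 0) (s : Multiset α) :
    #{w ∈ arrangements (k • s) | IsWordPow k w} = #(arrangements s) := by
  rw [← card_image_of_injective (arrangements s) (wordPow_left_injective hk)]
  congr 1
  ext w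
  simp only [mem_filter, mem_arrangements, mem_image]
  constructor
  · rintro ⟨hw, u, rfl⟩
    exact ⟨u, nsmul_right_injective hk ((coe_wordPow u k).symm.trans hw), rfl⟩
  · rintro ⟨u, rfl, rfl⟩
    exact ⟨coe_wordPow u k, u, rfl⟩

open scoped Classical in
theorem card_isWordPow_arrangements_mul_prod_factorial [DecidableEq α] {k : ℕ} (hk : k ≠ 0)
    {T : Finset α} (hT : ∀ a ∈ s, a ∈ T) (hdvd : ∀ a ∈ s, k ∣ s.count a) :
    #{w ∈ arrangements s | IsWordPow k w} * ∏ a ∈ T, (s.count a / k)! = (s.card / k)! := by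
  obtain ⟨t, rfl⟩ := s.exists_smul_of_dvd_count hdvd
  rw [card_isWordPow_arrangements_nsmul hk, Multiset.card_nsmul,
    Nat.mul_div_cancel_left _ hk.bot_lt, ← card_arrangements_mul_prod_factorial_count (T := T)
      fun a ha => hT a (Multiset.mem_nsmul.2 ⟨hk, ha⟩)]
  simp only [Multiset.count_nsmul, Nat.mul_div_cancel_left _ hk.bot_lt]

end Arrangements

section Moebius

variable {α : Type*} {m : ℕ}

lemma sum_divisors_moebius_eq_ite (k : ℕ) : ∑ δ ∈ k.divisors, μ δ = if k = 1 then 1 else 0 := by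
  rw [← ArithmeticFunction.coe_mul_zeta_apply, ArithmeticFunction.moebius_mul_coe_zeta,
    ArithmeticFunction.one_apply]

open scoped Classical in
lemma sum_moebius_isWordPow_eq_ite {w : List α} (hw : w ≠ []) :
    ∑ δ ∈ w.length.divisors with IsWordPow δ w, μ δ = if IsPrimitiveWord w then 1 else 0 := by
  have hlen : 0 < w.length := List.length_pos_iff.2 hw
  have hdvd := rotationPeriod_dvd_length w
  have hperiod : 0 < rotationPeriod w := Nat.pos_of_dvd_of_pos hdvd hlen
  have hdivisors : {δ ∈ w.length.divisors | IsWordPow δ w} =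
      (w.length / rotationPeriod w).divisors := by
    ext δ
    rw [mem_filter, Nat.mem_divisors, Nat.mem_divisors, Nat.dvd_div_iff_mul_dvd hdvd,
      isWordPow_iff_mul_rotationPeriod_dvd_length, mul_comm]
    have hquot : w.length / rotationPeriod w ≠ 0 :=
      (Nat.div_pos (Nat.le_of_dvd hlen hdvd) hperiod).ne'
    exact ⟨fun h => ⟨h.2, hquot⟩, fun h => ⟨⟨dvd_of_mul_left_dvd h.1, hlen.ne'⟩, h.1⟩⟩
  rw [hdivisors, sum_divisors_moebius_eq_ite]
  have hprim : w.length / rotationPeriod w = 1 ↔ IsPrimitiveWord w := by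
    rw [Nat.div_eq_iff_eq_mul_left hperiod hdvd, one_mul, IsPrimitiveWord, eq_comm]
  exact if_congr hprim rfl rfl

open scoped Classical in
theorem card_isPrimitiveWord_eq_sum_moebius (hm : 0 < m) {A : Finset (List α)}
    (hlen : ∀ w ∈ A, w.length = m) :
    (#{w ∈ A | IsPrimitiveWord w} : ℤ) =
      ∑ δ ∈ m.divisors, μ δ * #{w ∈ A | IsWordPow δ w} := by
  calc (#{w ∈ A | IsPrimitiveWord w} : ℤ)
      = ∑ w ∈ A, if IsPrimitiveWord w then 1 else 0 := by simp
    _ = ∑ w ∈ A, ∑ δ ∈ m.divisors, if IsWordPow δ w then μ δ else 0 := by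
        refine sum_congr rfl fun w hw => ?_
        rw [← sum_moebius_isWordPow_eq_ite (List.length_pos_iff.1 (hm.trans_eq (hlen w hw).symm)),
          hlen w hw, sum_filter]
    _ = ∑ δ ∈ m.divisors, μ δ * #{w ∈ A | IsWordPow δ w} := by
        rw [sum_comm]
        refine sum_congr rfl fun δ _ => ?_
        rw [← sum_filter, sum_const, nsmul_eq_mul, mul_comm]

end Moebius

section Lyndon

variable {α : Type*} [LinearOrder α] {w w' : List α}

lemma isLyndon_iff_lt_rotate :
    IsLyndon w ↔ w ≠ [] ∧ ∀ k, 0 < k → k < w.length → w < w.rotate k :=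
  and_congr_right fun _ => forall₃_congr fun _ _ hk => by
    rw [List.rotate_eq_drop_append_take hk.le]

lemma IsLyndon.le_of_isRotated (h : IsLyndon w) (hr : w ~r w') : w ≤ w' := by
  obtain ⟨k, hk, rfl⟩ := List.isRotated_iff_mod.1 hr
  obtain rfl | hk0 := k.eq_zero_or_pos
  · rw [List.rotate_zero]
  obtain rfl | hlt := hk.eq_or_lt
  · rw [List.rotate_length]
  · exact ((isLyndon_iff_lt_rotate.1 h).2 k hk0 hlt).le

lemma IsLyndon.eq_of_isRotated (h : IsLyndon w) (h' : IsLyndon w') (hr : w ~r w') : w = w' :=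
  le_antisymm (h.le_of_isRotated hr) (h'.le_of_isRotated hr.symm)

lemma IsLyndon.isPrimitiveWord (h : IsLyndon w) : IsPrimitiveWord w := by
  have hlen : 0 < w.length := List.length_pos_iff.2 h.1
  have hdvd := rotationPeriod_dvd_length w
  refine (Nat.le_of_dvd hlen hdvd).eq_of_not_lt fun hlt => ?_
  have := (isLyndon_iff_lt_rotate.1 h).2 _ (Nat.pos_of_dvd_of_pos hdvd hlen) hlt
  rw [rotate_eq_self_iff_rotationPeriod_dvd.2 dvd_rfl] at this
  exact this.false

lemma IsPrimitiveWord.exists_isLyndon_isRotated (h : IsPrimitiveWord w) :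
    ∃ l, IsLyndon l ∧ l ~r w := by
  obtain ⟨l, hl, hmin⟩ := exists_min_image w.cyclicPermutations.toFinset id
    ⟨w, List.mem_toFinset.2 w.mem_cyclicPermutations_self⟩
  simp only [List.mem_toFinset, List.mem_cyclicPermutations_iff, id] at hl hmin
  have hprim := (isPrimitiveWord_congr hl).2 h
  refine ⟨l, isLyndon_iff_lt_rotate.2 ⟨hprim.ne_nil, fun k hk0 hk => ?_⟩, hl⟩
  refine (hmin _ ((List.IsRotated.forall l k).trans hl)).lt_of_ne fun heq => ?_
  have hdvd := rotate_eq_self_iff_rotationPeriod_dvd.1 heq.symm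
  rw [hprim] at hdvd
  exact hk.not_ge (Nat.le_of_dvd hk0 hdvd)

open scoped Classical in
theorem card_isLyndon_mul_eq_card_isPrimitiveWord {m : ℕ} {A : Finset (List α)}
    (hlen : ∀ w ∈ A, w.length = m) (hrot : ∀ w ∈ A, ∀ w', w ~r w' → w' ∈ A) :
    #{w ∈ A | IsLyndon w} * m = #{w ∈ A | IsPrimitiveWord w} := by
  have hclasses : {w ∈ A | IsPrimitiveWord w} =
      ({w ∈ A | IsLyndon w} : Finset _).biUnion fun l => l.cyclicPermutations.toFinset := by
    ext w
    simp only [mem_filter, mem_biUnion, List.mem_toFinset, List.mem_cyclicPermutations_iff]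
    constructor
    · rintro ⟨hw, hprim⟩
      obtain ⟨l, hl, hlw⟩ := hprim.exists_isLyndon_isRotated
      exact ⟨l, ⟨hrot w hw l hlw.symm, hl⟩, hlw.symm⟩
    · rintro ⟨l, ⟨hlA, hl⟩, hwl⟩
      exact ⟨hrot l hlA w hwl.symm, (isPrimitiveWord_congr hwl).2 hl.isPrimitiveWord⟩
  rw [hclasses, card_biUnion]
  · refine (sum_const_nat fun l hl => ?_).symm
    obtain ⟨hlA, hl⟩ := mem_filter.1 hl
    rw [hl.isPrimitiveWord.card_toFinset_cyclicPermutations, hlen l hlA]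
  · intro l hl l' hl' hne
    simp only [disjoint_left, List.mem_toFinset, List.mem_cyclicPermutations_iff]
    exact fun w hw hw' =>
      hne ((mem_filter.1 hl).2.eq_of_isRotated (mem_filter.1 hl').2 (hw.symm.trans hw'))

end Lyndon

section Witt

variable {α : Type*} [LinearOrder α] {s : Multiset α} {T : Finset α}

open scoped Classical in
theorem card_isLyndon_arrangements_mul_card (hs : s ≠ 0) (hT : ∀ a ∈ s, a ∈ T) :
    (#{w ∈ arrangements s | IsLyndon w} * s.card : ℤ) =
      ∑ δ ∈ (T.gcd s.count).divisors, μ δ * #{w ∈ arrangements s | IsWordPow δ w} := by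
  have hlen : ∀ w ∈ arrangements s, w.length = s.card := fun w hw => by
    rw [← mem_arrangements.1 hw, Multiset.coe_card]
  have hrot : ∀ w ∈ arrangements s, ∀ w', w ~r w' → w' ∈ arrangements s := fun w hw w' h =>
    mem_arrangements.2 ((Multiset.coe_eq_coe.2 h.perm.symm).trans (mem_arrangements.1 hw))
  have hcard : s.card ≠ 0 := Multiset.card_eq_zero.not.2 hs
  have hgcd : T.gcd s.count ∣ s.card := by
    rw [← Multiset.sum_count_eq_card hT]
    exact dvd_sum fun a ha => gcd_dvd ha
  rw [← Nat.cast_mul, card_isLyndon_mul_eq_card_isPrimitiveWord hlen hrot,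
    card_isPrimitiveWord_eq_sum_moebius hcard.bot_lt hlen]
  refine (sum_subset (Nat.divisors_subset_of_dvd hcard hgcd) fun δ _ hδ => ?_).symm
  have hempty : {w ∈ arrangements s | IsWordPow δ w} = ∅ := by
    refine filter_eq_empty_iff.2 fun w hw hpow => hδ (Nat.mem_divisors.2 ⟨?_, ?_⟩)
    · refine dvd_gcd fun a _ => ?_
      rw [← mem_arrangements.1 hw, Multiset.coe_count]
      exact hpow.dvd_count a
    · exact ne_zero_of_dvd_ne_zero hcard hgcd
  rw [hempty, card_empty, Nat.cast_zero, mul_zero]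

open scoped Classical in
theorem card_isLyndon_arrangements (hs : s ≠ 0) (hT : ∀ a ∈ s, a ∈ T) :
    (#{w ∈ arrangements s | IsLyndon w} : ℚ) =
      1 / s.card * ∑ δ ∈ (T.gcd s.count).divisors,
        (μ δ : ℚ) * (s.card / δ)! / ∏ a ∈ T, ((s.count a / δ)! : ℚ) := by
  have hcard : (s.card : ℚ) ≠ 0 := Nat.cast_ne_zero.2 (Multiset.card_eq_zero.not.2 hs)
  rw [one_div, eq_inv_mul_iff_mul_eq₀ hcard, mul_comm]
  have hmul := congrArg (Int.cast : ℤ → ℚ) (card_isLyndon_arrangements_mul_card hs hT)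
  push_cast at hmul
  refine hmul.trans (sum_congr rfl fun δ hδ => ?_)
  have hδ0 : δ ≠ 0 := (Nat.pos_of_mem_divisors hδ).ne'
  have hdvd : ∀ a ∈ s, δ ∣ s.count a := fun a ha =>
    (Nat.dvd_of_mem_divisors hδ).trans (gcd_dvd (hT a ha))
  have hprod : ∏ a ∈ T, ((s.count a / δ)! : ℚ) ≠ 0 :=
    prod_ne_zero_iff.2 fun a _ => Nat.cast_ne_zero.2 (Nat.factorial_ne_zero _)
  rw [eq_div_iff hprod, mul_assoc, ← card_isWordPow_arrangements_mul_prod_factorial hδ0 hT hdvd]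
  push_cast
  rfl

theorem witt_second_formula_general (T : Finset α) (m : ℕ) (hm : 1 ≤ m) (n : α → ℕ)
    (hsum : ∑ a ∈ T, n a = m) :
    ({f : Fin m → α | IsLyndon (List.ofFn f) ∧ ∀ a ∈ T, (List.ofFn f).count a = n a}.ncard : ℚ) =
      (1 / (m : ℚ)) * ∑ δ ∈ (T.gcd n).divisors,
        (μ δ : ℚ) * ((m / δ)! : ℚ) / ∏ a ∈ T, ((n a / δ)! : ℚ) := by
  classical
  obtain ⟨s, hT, hcount⟩ := exists_multiset_count_eq T n
  have hcard : s.card = m := by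
    rw [← hsum, ← Multiset.sum_count_eq_card hT, sum_congr rfl hcount]
  have hs : s ≠ 0 := Multiset.card_pos.1 (hm.trans_eq hcard.symm)
  have hwords : {f : Fin m → α | IsLyndon (List.ofFn f) ∧ ∀ a ∈ T, (List.ofFn f).count a = n a} =
      {f | List.ofFn f ∈ ({w ∈ arrangements s | IsLyndon w} : Finset _)} := by
    ext f
    have hcontent : (∀ a ∈ T, (List.ofFn f).count a = n a) ↔ List.ofFn f ∈ arrangements s := by
      rw [mem_arrangements_iff_count_eq hT, hcard, List.length_ofFn]
      simp +contextual [hcount]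
    simp [hcontent, and_comm]
  rw [hwords, ncard_setOf_ofFn_mem, card_isLyndon_arrangements hs hT, hcard, gcd_congr rfl hcount]
  · congr! 3 with δ
    exact prod_congr rfl fun a ha => by rw [hcount a ha]
  · intro w hw
    rw [← hcard, ← mem_arrangements.1 (mem_filter.1 hw).1, Multiset.coe_card]

end Witt

open scoped Classical in
/-- Witt's second formula: for `n₁ + ⋯ + n_d = m ≥ 1`, the number of
Lyndon words of length `m` over `{1, …, d}` in which letter `i` occurs exactly `n i`
times equals `(1/m) ∑_{δ} μ(δ) (m/δ)! / ((n₁/δ)! ⋯ (n_d/δ)!)`, the sum running over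
all positive integers `δ` dividing every `n i` (equivalently over the divisors of
their gcd), `μ` being the Möbius function. -/
theorem witt_second_formula (d m : ℕ) (hm : 1 ≤ m) (n : Fin d → ℕ)
    (hsum : ∑ i, n i = m) :
    ((Finset.univ.filter fun f : Fin m → Fin d =>
        IsLyndon (List.ofFn f) ∧ ∀ i, (List.ofFn f).count i = n i).card : ℚ) =
      (1 / (m : ℚ)) * ∑ δ ∈ (Finset.univ.gcd n).divisors,
        ((ArithmeticFunction.moebius δ : ℤ) : ℚ) * ((m / δ).factorial : ℚ) /
          ∏ i, ((n i / δ).factorial : ℚ) := by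
  simpa [← Set.ncard_coe_finset] using witt_second_formula_general univ m hm n hsum
end

section
/- (Signature of a piecewise-linear path via Chen's identity) Let γ be the piecewise-linear path in ℝ^d with successive displacements x_1, …, x_n ∈ ℝ^d. Then for each m ≥ 0, level m of the signature of γ, as an element of (ℝ^d)^{⊗m}, equals the level-m component of the truncated tensor product exp(x_1) ⊗ exp(x_2) ⊗ ⋯ ⊗ exp(x_n), where exp(x) = Σ_{k=0}^{m} x^{⊗k}/k! in T^{(m)}(ℝ^d). -/
open MeasureTheory intervalIntegral

/-- Words of length at most `m` over the alphabet `{1, …, d}`: an indexing of the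
standard (word) basis of the truncated tensor algebra `T^{(m)}(ℝ^d)`. -/
def TWord (d m : ℕ) := {w : List (Fin d) // w.length ≤ m}

/-- The truncated tensor algebra `T^{(m)}(ℝ^d) = ⊕_{k=0}^{m} (ℝ^d)^{⊗k}`, an element
being recorded by its coordinates on the word basis. -/
def TTA (d m : ℕ) := TWord d m → ℝ

namespace TTA

variable {d m : ℕ}

/-- The empty word, indexing the level-0 component. -/
def emptyWord : TWord d m := ⟨[], by simp⟩

/-- The multiplicative unit `1` of `T^{(m)}(ℝ^d)`. -/
def one : TTA d m := fun w => if w.1 = [] then 1 else 0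

/-- The truncated tensor (concatenation) product on `T^{(m)}(ℝ^d)`. -/
def mul (x y : TTA d m) : TTA d m := fun w =>
  ∑ j ∈ Finset.range (w.1.length + 1),
    x ⟨w.1.take j, by rw [List.length_take]; exact le_trans (min_le_right _ _) w.2⟩ *
    y ⟨w.1.drop j, by rw [List.length_drop]; exact le_trans (Nat.sub_le _ _) w.2⟩

/-- Powers in `T^{(m)}(ℝ^d)`. -/
def pow (x : TTA d m) : ℕ → TTA d m
  | 0 => one
  | n + 1 => mul x (pow x n)

/-- `exp T = ∑_{n=0}^{m} T^n / n!` in `T^{(m)}(ℝ^d)`. -/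
noncomputable def exp (x : TTA d m) : TTA d m := fun w =>
  ∑ n ∈ Finset.range (m + 1), ((n.factorial : ℝ))⁻¹ * pow x n w

/-- `log (1 + T) = ∑_{n=1}^{m} (-1)^{n-1} T^n / n` in `T^{(m)}(ℝ^d)`, applied to an
element `S = 1 + T`. -/
noncomputable def log (x : TTA d m) : TTA d m := fun w =>
  ∑ n ∈ Finset.Icc 1 m, ((-1 : ℝ) ^ (n - 1) / (n : ℝ)) * pow (fun u => x u - one u) n w

end TTA

namespace TTA

/-- The element of `T^{(m)}(ℝ^d)` given by a vector `v ∈ ℝ^d` placed in level 1. -/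
def seg {d m : ℕ} (v : Fin d → ℝ) : TTA d m := fun w =>
  match w.1 with
  | [i] => v i
  | _ => 0

/-- Product of a list of elements of `T^{(m)}(ℝ^d)`. -/
def listProd {d m : ℕ} : List (TTA d m) → TTA d m
  | [] => one
  | x :: L => mul x (listProd L)

end TTA

/-!
Chen's identity says that the signature is multiplicative under concatenation: splitting
`∫_a^c = ∫_a^b + ∫_b^c` in the outermost integral and inducting on the word writes the coefficient
at `w` over `[a, c]` as a sum over all ways of cutting `w` into a prefix, integrated over `[a, b]`,
and a suffix, integrated over `[b, c]`. On a single segment with velocity `v` the integrand is a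
constant times a power of `t - a`, so the coefficient at `i₁ ⋯ iₖ` is
`v i₁ ⋯ v iₖ * (b - a) ^ k / k!`, which is that of the tensor exponential of the displacement.
-/

open Set Finset

theorem sum_take_mul_drop_concat {α R : Type*} [NonUnitalNonAssocSemiring R]
    (f g : List α → R) (w : List α) (i : α) :
    ∑ j ∈ range ((w ++ [i]).length + 1), f ((w ++ [i]).take j) * g ((w ++ [i]).drop j) =
      ∑ j ∈ range (w.length + 1), f (w.take j) * g (w.drop j ++ [i]) + f (w ++ [i]) * g [] := by
  rw [List.length_append, List.length_singleton, sum_range_succ]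
  congr 1
  · refine sum_congr rfl fun j hj => ?_
    have hj : j ≤ w.length := mem_range_succ_iff.1 hj
    rw [List.take_append_of_le_length hj, List.drop_append_of_le_length hj]
  · rw [List.take_of_length_le (by simp), List.drop_of_length_le (by simp)]

section Signature

variable {d : ℕ} {γ : ℝ → Fin d → ℝ} {a b c : ℝ}

@[simp]
theorem sig_nil : sig d γ a b [] = 1 := rfl

theorem sig_concat (w : List (Fin d)) (i : Fin d) :
    sig d γ a b (w ++ [i]) = ∫ t in a..b, sig d γ a t w * deriv (fun s => γ s i) t := by
  simp only [sig, List.reverse_append, List.reverse_singleton, List.singleton_append, sigRev]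

theorem continuousOn_sig
    (hab : ∀ i, IntervalIntegrable (deriv fun s => γ s i) volume a b) (w : List (Fin d)) :
    ContinuousOn (fun t => sig d γ a t w) (uIcc a b) := by
  induction w using List.reverseRecOn with
  | nil => simpa only [sig_nil] using continuousOn_const
  | append_singleton w i ih =>
    simp only [sig_concat]
    exact continuousOn_primitive_interval' ((hab i).continuousOn_mul ih) left_mem_uIcc

theorem intervalIntegrable_sig_mul_deriv
    (hab : ∀ i, IntervalIntegrable (deriv fun s => γ s i) volume a b) (w : List (Fin d))
    (i : Fin d) :
    IntervalIntegrable (fun t => sig d γ a t w * deriv (fun s => γ s i) t) volume a b :=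
  (hab i).continuousOn_mul (continuousOn_sig hab w)

theorem sig_chen (hab : ∀ i, IntervalIntegrable (deriv fun s => γ s i) volume a b)
    (hbc : ∀ i, IntervalIntegrable (deriv fun s => γ s i) volume b c) (w : List (Fin d)) :
    sig d γ a c w =
      ∑ j ∈ range (w.length + 1), sig d γ a b (w.take j) * sig d γ b c (w.drop j) := by
  induction w using List.reverseRecOn generalizing c with
  | nil => simp
  | append_singleton w i ih =>
    set γ' := deriv fun s => γ s i
    have integrable_split (j : ℕ) : IntervalIntegrable
        (fun t => sig d γ a b (w.take j) * (sig d γ b t (w.drop j) * γ' t)) volume b c :=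
      (intervalIntegrable_sig_mul_deriv hbc _ i).const_mul _
    have integrand_split : EqOn (fun t => sig d γ a t w * γ' t)
        (fun t => ∑ j ∈ range (w.length + 1),
          sig d γ a b (w.take j) * (sig d γ b t (w.drop j) * γ' t)) (uIcc b c) := by
      intro t ht
      have hbt : ∀ i, IntervalIntegrable (deriv fun s => γ s i) volume b t := fun i =>
        (hbc i).mono_set (uIcc_subset_uIcc_left ht)
      simp only [ih hbt, sum_mul, mul_assoc]
    have integrable_tail : IntervalIntegrable (fun t => sig d γ a t w * γ' t) volume b c :=
      (IntervalIntegrable.sum _ fun j _ => integrable_split j).congr_uIoo fun t ht => by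
        simpa only [Finset.sum_apply] using
          (integrand_split (uIoo_subset_uIcc_self ht)).symm
    have integral_tail : ∫ t in b..c, sig d γ a t w * γ' t =
        ∑ j ∈ range (w.length + 1),
          sig d γ a b (w.take j) * sig d γ b c (w.drop j ++ [i]) := by
      rw [integral_congr integrand_split, integral_finsetSum fun j _ => integrable_split j]
      simp only [intervalIntegral.integral_const_mul, sig_concat, γ']
    rw [sum_take_mul_drop_concat, sig_nil, mul_one, ← integral_tail, add_comm, sig_concat,
      sig_concat]
    exact (integral_add_adjacent_intervals
      (intervalIntegrable_sig_mul_deriv hab w i) integrable_tail).symm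

theorem sig_of_deriv_eq_const {v : Fin d → ℝ}
    (hv : ∀ i, ∀ t ∈ uIoo a b, deriv (fun s => γ s i) t = v i) (w : List (Fin d)) :
    sig d γ a b w = (w.map v).prod * ((b - a) ^ w.length / (w.length.factorial : ℝ)) := by
  induction w using List.reverseRecOn generalizing b with
  | nil => simp
  | append_singleton w i ih =>
    have integrand_eq : EqOn (fun t => sig d γ a t w * deriv (fun s => γ s i) t)
        (fun t => (w.map v).prod * v i / (w.length.factorial : ℝ) * (t - a) ^ w.length)
        (uIoo a b) := by
      intro t ht
      have hsub : uIoo a t ⊆ uIoo a b :=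
        uIoo_subset_Ioo left_mem_uIcc (uIoo_subset_uIcc_self ht)
      simp only [ih fun i s hs => hv i s (hsub hs), hv i t ht]
      ring
    have integral_monomial : ∫ t in a..b, (t - a) ^ w.length =
        (b - a) ^ (w.length + 1) / ((w.length : ℝ) + 1) := by
      simp [integral_comp_sub_right fun t => t ^ w.length]
    rw [sig_concat, integral_congr_uIoo integrand_eq, intervalIntegral.integral_const_mul,
      integral_monomial]
    simp only [List.map_append, List.map_singleton, List.prod_append, List.prod_singleton,
      List.length_append, List.length_singleton, Nat.factorial_succ]
    push_cast
    field_simp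

end Signature

namespace TTA

variable {d m : ℕ}

theorem seg_apply_of_length_ne_one (v : Fin d → ℝ) {w : TWord d m} (hw : w.1.length ≠ 1) :
    seg v w = 0 := by
  obtain ⟨_ | ⟨i, _ | ⟨j, w⟩⟩, _⟩ := w <;> simp_all [seg]

theorem seg_mul_apply_cons (v : Fin d → ℝ) (y : TTA d m) (i : Fin d) (w : List (Fin d))
    (hw : (i :: w).length ≤ m) :
    mul (seg v) y ⟨i :: w, hw⟩ = v i * y ⟨w, (Nat.le_succ _).trans hw⟩ := by
  unfold mul
  rw [sum_eq_single_of_mem 1 (by simp)]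
  · simp [seg]
  · intro j hj hj1
    refine mul_eq_zero_of_left (seg_apply_of_length_ne_one v ?_) _
    simp only [List.length_take, Finset.mem_range] at *
    lia

theorem pow_seg_apply (v : Fin d → ℝ) (k : ℕ) (w : TWord d m) :
    pow (seg v) k w = if w.1.length = k then (w.1.map v).prod else 0 := by
  obtain ⟨w, hw⟩ := w
  induction k generalizing w with
  | zero => cases w <;> simp [pow, one]
  | succ k ih =>
    cases w with
    | nil => simp [pow, mul, seg]
    | cons i w => simp [pow, seg_mul_apply_cons, ih]

theorem exp_seg_apply (v : Fin d → ℝ) (w : TWord d m) :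
    exp (seg v) w = (w.1.map v).prod / (w.1.length.factorial : ℝ) := by
  have hw : w.1.length ∈ range (m + 1) := mem_range_succ_iff.2 w.2
  simp only [exp, pow_seg_apply, mul_ite, mul_zero, sum_ite_eq, if_pos hw]
  rw [inv_mul_eq_div]

end TTA

section TruncatedSignature

variable {d m : ℕ} {γ : ℝ → Fin d → ℝ} {a b c : ℝ}

/-- The signature of `γ` over `[a, b]` truncated at level `m`, as an element of `T^{(m)}(ℝ^d)`. -/
noncomputable def truncSig (m : ℕ) (γ : ℝ → Fin d → ℝ) (a b : ℝ) : TTA d m :=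
  fun w => sig d γ a b w.1

theorem truncSig_self : truncSig m γ a a = TTA.one := by
  funext ⟨w, hw⟩
  induction w using List.reverseRecOn <;> simp [truncSig, TTA.one, sig_concat]

theorem truncSig_chen (hab : ∀ i, IntervalIntegrable (deriv fun s => γ s i) volume a b)
    (hbc : ∀ i, IntervalIntegrable (deriv fun s => γ s i) volume b c) :
    truncSig m γ a c = TTA.mul (truncSig m γ a b) (truncSig m γ b c) :=
  funext fun w => sig_chen hab hbc w.1

theorem truncSig_eq_listProd (n : ℕ) (t : ℕ → ℝ)
    (hint : ∀ j < n, ∀ i, IntervalIntegrable (deriv fun s => γ s i) volume (t j) (t (j + 1))) :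
    truncSig m γ (t 0) (t n) =
      TTA.listProd (List.ofFn fun j : Fin n => truncSig m γ (t j) (t (j + 1))) := by
  induction n generalizing t with
  | zero => exact truncSig_self
  | succ n ih =>
    have hint_tail : ∀ j < n, ∀ i,
        IntervalIntegrable (deriv fun s => γ s i) volume (t (j + 1)) (t (j + 1 + 1)) :=
      fun j hj => hint (j + 1) (by lia)
    have hint_total : ∀ i, IntervalIntegrable (deriv fun s => γ s i) volume (t 1) (t (n + 1)) :=
      fun i => IntervalIntegrable.trans_iterate (a := fun j => t (j + 1))
        fun j hj => hint_tail j hj i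
    rw [List.ofFn_succ, TTA.listProd, truncSig_chen (hint 0 n.succ_pos) hint_total,
      ih (fun j => t (j + 1)) hint_tail]
    simp

theorem truncSig_of_deriv_eq_const {v : Fin d → ℝ}
    (hv : ∀ i, ∀ t ∈ uIoo a b, deriv (fun s => γ s i) t = v i) :
    truncSig m γ a b = TTA.exp (TTA.seg ((b - a) • v)) := by
  funext w
  rw [truncSig, sig_of_deriv_eq_const hv, TTA.exp_seg_apply]
  have prod_smul : (w.1.map ((b - a) • v)).prod = (b - a) ^ w.1.length * (w.1.map v).prod := by
    simp [Pi.smul_def, List.prod_map_mul]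
  rw [prod_smul]
  ring

end TruncatedSignature

theorem deriv_apply_of_eq_add_smul {d : ℕ} {γ : ℝ → Fin d → ℝ} {p v : Fin d → ℝ} {a b t : ℝ}
    (hγ : ∀ s ∈ uIoo a b, γ s = p + (s - a) • v) (ht : t ∈ uIoo a b) (i : Fin d) :
    deriv (fun s => γ s i) t = v i := by
  have heq : (fun s => γ s i) =ᶠ[nhds t] fun s => p i + (s - a) * v i := by
    filter_upwards [isOpen_Ioo.mem_nhds ht] with s hs
    simp [hγ s hs]
  simp [heq.deriv_eq]

theorem sig_piecewise_linear_general {d n : ℕ} (m : ℕ) (t : ℕ → ℝ) (v : Fin n → Fin d → ℝ)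
    (γ : ℝ → Fin d → ℝ)
    (hγ : ∀ j : Fin n, ∀ s ∈ uIcc (t j) (t (j + 1)), γ s = γ (t j) + (s - t j) • v j) :
    truncSig m γ (t 0) (t n) =
      TTA.listProd (List.ofFn fun j : Fin n => TTA.exp (TTA.seg (γ (t (j + 1)) - γ (t j)))) := by
  have hderiv (j : Fin n) : ∀ i, ∀ s ∈ uIoo (t j) (t (j + 1)), deriv (fun r => γ r i) s = v j i :=
    fun i s hs => deriv_apply_of_eq_add_smul (fun r hr => hγ j r (uIoo_subset_uIcc_self hr)) hs i
  have hint : ∀ j < n, ∀ i,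
      IntervalIntegrable (deriv fun s => γ s i) volume (t j) (t (j + 1)) := fun j hj i =>
    intervalIntegrable_const.congr_uIoo fun s hs => (hderiv ⟨j, hj⟩ i s hs).symm
  rw [truncSig_eq_listProd n t hint]
  congr 2 with j : 1
  rw [truncSig_of_deriv_eq_const (hderiv j), hγ j _ right_mem_uIcc, add_sub_cancel_left]

section PolygonalPath

variable {E : Type*} [AddCommGroup E] [Module ℝ E] {n : ℕ}

/-- The polygonal path started at `0` that traverses the displacement `x j` at
constant velocity during the time interval `[j, j + 1]`. -/
def polygonalPath (x : Fin n → E) (t : ℝ) : E :=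
  ∑ j : Fin n, min (max (t - (j : ℕ)) 0) 1 • x j

theorem ramp_eq_add_ite (j k : ℕ) {s : ℝ} (hs : s ∈ Set.Icc (k : ℝ) (k + 1)) :
    min (max (s - j) 0) 1 = min (max ((k : ℝ) - j) 0) 1 + if j = k then s - k else 0 := by
  obtain ⟨hks, hsk⟩ := hs
  rcases lt_trichotomy j k with hjk | rfl | hkj
  · have : (j : ℝ) + 1 ≤ k := by exact_mod_cast hjk
    grind
  · grind
  · have : (k : ℝ) + 1 ≤ j := by exact_mod_cast hkj
    grind

theorem polygonalPath_eq_add_smul (x : Fin n → E) (k : Fin n) {s : ℝ}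
    (hs : s ∈ Set.Icc (k : ℝ) (k + 1)) :
    polygonalPath x s = polygonalPath x k + (s - k) • x k := by
  simp only [polygonalPath, ramp_eq_add_ite _ _ hs, add_smul, sum_add_distrib, ite_smul,
    zero_smul, Fin.val_inj, sum_ite_eq', Finset.mem_univ, if_true]

theorem polygonalPath_succ_sub (x : Fin n → E) (k : Fin n) :
    polygonalPath x (k + 1) - polygonalPath x k = x k := by
  simp [polygonalPath_eq_add_smul x k (Set.right_mem_Icc.2 (le_add_of_nonneg_right zero_le_one))]

end PolygonalPath

/-- signature of a piecewise-linear path via Chen's identity: for the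
piecewise-linear path `γ` on `[0, n]` with successive displacements `x 0, …, x (n-1)`,
level `m` of the signature of `γ` equals the level-`m` component of the truncated
tensor product `exp (x 0) ⊗ exp (x 1) ⊗ ⋯ ⊗ exp (x (n-1))` in `T^{(m)}(ℝ^d)`,
where `exp v = ∑_{k=0}^{m} v^{⊗k} / k!`. -/
theorem sig_piecewise_linear (d n m : ℕ) (x : Fin n → Fin d → ℝ)
    (γ : ℝ → Fin d → ℝ)
    (hγ : ∀ t i, γ t i = ∑ j : Fin n, min (max (t - (j : ℕ)) 0) 1 * x j i)
    (w : List (Fin d)) (hw : w.length = m) :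
    sig d γ 0 n w =
      TTA.listProd (List.ofFn fun j => TTA.exp (TTA.seg (x j))) ⟨w, hw.le⟩ := by
  obtain rfl : γ = polygonalPath x := by ext t i; simp [hγ, polygonalPath]
  have h := congrFun (sig_piecewise_linear_general m Nat.cast x (polygonalPath x)
    fun j s hs => polygonalPath_eq_add_smul x j (by simpa using hs)) ⟨w, hw.le⟩
  simpa only [truncSig, Nat.cast_succ, polygonalPath_succ_sub, Nat.cast_zero] using h
end
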